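/- Let N ≥ 3, let a₁, …, a_N > 0 and b₁, …, b_N ∈ ℝ, and let h(p) be the periodic N×N Hermitian matrix with corner phases. Suppose λ : ℝ → ℝ and W : ℝ → ℂ^N are differentiable functions such that for all p ∈ ℝ, ‖W(p)‖ = 1 and h(p)W(p) = λ(p)W(p). Then for every p ∈ (0, π), λ'(p) = −2 a_N·Im(e^{ip}·conj(W₁(p))·W_N(p)) and λ'(p) ≠ 0. -/

import Mathlib

open Matrix Complex

/-- The periodic `N×N` Hermitian matrix with corner phases. -/
noncomputable def hper (N : ℕ) (a b : ℕ → ℝ) (p : ℝ) : Matrix (Fin N) (Fin N) ℂ :=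
  Matrix.of fun i j =>
    if (i : ℕ) = (j : ℕ) then (b i : ℂ)
    else if (i : ℕ) + 1 = (j : ℕ) then (a i : ℂ)
    else if (j : ℕ) + 1 = (i : ℕ) then (a j : ℂ)
    else if (i : ℕ) = 0 ∧ (j : ℕ) + 1 = N then
      (a (N - 1) : ℂ) * Complex.exp ((p : ℂ) * Complex.I)
    else if (j : ℕ) = 0 ∧ (i : ℕ) + 1 = N then
      (a (N - 1) : ℂ) * Complex.exp (-((p : ℂ) * Complex.I))
    else 0

lemma hper_sub (N : ℕ) (hN : 2 < N) (a b : ℕ → ℝ) (p q : ℝ) :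
    hper N a b q - hper N a b p =
      Matrix.single (⟨0, by omega⟩ : Fin N) (⟨N - 1, by omega⟩ : Fin N)
        ((a (N - 1) : ℂ) * (Complex.exp ((q : ℂ) * Complex.I) - Complex.exp ((p : ℂ) * Complex.I)))
      + Matrix.single (⟨N - 1, by omega⟩ : Fin N) (⟨0, by omega⟩ : Fin N)
        ((a (N - 1) : ℂ) *
          (Complex.exp (-((q : ℂ) * Complex.I)) - Complex.exp (-((p : ℂ) * Complex.I)))) := by
  ext ⟨i, hi⟩ ⟨j, hj⟩
  simp only [hper, Matrix.sub_apply, Matrix.of_apply, Matrix.add_apply, Matrix.single_apply,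
    Fin.mk.injEq]
  split_ifs <;> first | omega | ring

lemma hper_herm (N : ℕ) (hN : 2 < N) (a b : ℕ → ℝ) (p : ℝ) :
    (hper N a b p)ᴴ = hper N a b p := by
  ext ⟨i, hi⟩ ⟨j, hj⟩
  simp only [hper, Matrix.conjTranspose_apply, Matrix.of_apply]
  split_ifs <;> first
    | omega
    | (subst_vars; simp; done)
    | (simp [← Complex.exp_conj]; done)

lemma row_mid (N : ℕ) (a b : ℕ → ℝ) (p : ℝ) (v : Fin N → ℂ) (k : ℕ) (hk : k + 2 < N) :
    (hper N a b p *ᵥ v) ⟨k + 1, by omega⟩ =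
      a k * v ⟨k, by omega⟩ + b (k + 1) * v ⟨k + 1, by omega⟩
        + a (k + 1) * v ⟨k + 2, by omega⟩ := by
  have : ∀ j : Fin N, hper N a b p ⟨k + 1, by omega⟩ j * v j =
      (if j = ⟨k, by omega⟩ then (a k : ℂ) * v j else 0)
      + (if j = ⟨k + 1, by omega⟩ then (b (k + 1) : ℂ) * v j else 0)
      + (if j = ⟨k + 2, by omega⟩ then (a (k + 1) : ℂ) * v j else 0) := by
    rintro ⟨j, hj⟩
    simp only [hper, Matrix.of_apply, Fin.mk.injEq]
    split_ifs <;> first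
      | omega
      | (exfalso; grind; done)
      | (subst_vars; simp; done)
  simp only [Matrix.mulVec, dotProduct]
  rw [Finset.sum_congr rfl fun j _ => this j]
  simp [Finset.sum_add_distrib]

lemma row_first (N : ℕ) (hN : 2 < N) (a b : ℕ → ℝ) (p : ℝ) (v : Fin N → ℂ) :
    (hper N a b p *ᵥ v) ⟨0, by omega⟩ =
      b 0 * v ⟨0, by omega⟩ + a 0 * v ⟨1, by omega⟩
        + a (N - 1) * Complex.exp ((p : ℂ) * Complex.I) * v ⟨N - 1, by omega⟩ := by
  have : ∀ j : Fin N, hper N a b p ⟨0, by omega⟩ j * v j =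
      (if j = ⟨0, by omega⟩ then (b 0 : ℂ) * v j else 0)
      + (if j = ⟨1, by omega⟩ then (a 0 : ℂ) * v j else 0)
      + (if j = ⟨N - 1, by omega⟩ then
          (a (N - 1) : ℂ) * Complex.exp ((p : ℂ) * Complex.I) * v j else 0) := by
    rintro ⟨j, hj⟩
    simp only [hper, Matrix.of_apply, Fin.mk.injEq]
    split_ifs <;> first | omega | (exfalso; grind) | simp
  simp only [Matrix.mulVec, dotProduct]
  rw [Finset.sum_congr rfl fun j _ => this j]
  simp [Finset.sum_add_distrib]

lemma row_last (N : ℕ) (hN : 2 < N) (a b : ℕ → ℝ) (p : ℝ) (v : Fin N → ℂ) :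
    (hper N a b p *ᵥ v) ⟨N - 1, by omega⟩ =
      b (N - 1) * v ⟨N - 1, by omega⟩ + a (N - 2) * v ⟨N - 2, by omega⟩
        + a (N - 1) * Complex.exp (-((p : ℂ) * Complex.I)) * v ⟨0, by omega⟩ := by
  have : ∀ j : Fin N, hper N a b p ⟨N - 1, by omega⟩ j * v j =
      (if j = ⟨N - 1, by omega⟩ then (b (N - 1) : ℂ) * v j else 0)
      + (if j = ⟨N - 2, by omega⟩ then (a (N - 2) : ℂ) * v j else 0)
      + (if j = ⟨0, by omega⟩ then
          (a (N - 1) : ℂ) * Complex.exp (-((p : ℂ) * Complex.I)) * v j else 0) := by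
    rintro ⟨j, hj⟩
    simp only [hper, Matrix.of_apply, Fin.mk.injEq]
    split_ifs <;> first | omega | (simp; done) | (have : j = N - 2 := by omega
                                                  subst this; simp; done)
  simp only [Matrix.mulVec, dotProduct]
  rw [Finset.sum_congr rfl fun j _ => this j]
  simp [Finset.sum_add_distrib]

lemma rec_zero (N : ℕ) (a b : ℕ → ℝ) (ha : ∀ k < N, 0 < a k) (l : ℝ) (f : Fin N → ℝ)
    (hrec : ∀ k (hk : k + 2 < N), a k * f ⟨k, by omega⟩ + b (k + 1) * f ⟨k + 1, by omega⟩
        + a (k + 1) * f ⟨k + 2, hk⟩ = l * f ⟨k + 1, by omega⟩)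
    (h0 : ∀ h, f ⟨0, h⟩ = 0) (h1 : ∀ h, f ⟨1, h⟩ = 0) : ∀ k (h : k < N), f ⟨k, h⟩ = 0 := by
  intro k
  induction k using Nat.twoStepInduction with
  | zero => exact h0
  | one => exact h1
  | more k ih1 ih2 =>
    intro h
    have := hrec k h
    rw [ih1, ih2] at this
    simpa [(ha (k + 1) (by omega)).ne'] using this

lemma im_mul_real (c w : ℂ) (r : ℝ) : (c * ((r : ℂ) * w)).im = r * (c * w).im := by
  simp; ring

lemma corner_zero (c w : ℂ) (hc : c ≠ 0) (p : ℝ) (hp : Real.sin p ≠ 0) (h : (c * w).im = 0)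
    (h2 : (Complex.exp ((p : ℂ) * Complex.I) * (c * w)).im = 0) : w = 0 := by
  rw [Complex.mul_im, Complex.exp_ofReal_mul_I_im, h] at h2
  have h3 : (c * w).re = 0 := by simpa [hp] using h2
  have : c * w = 0 := Complex.ext h3 h
  simpa [hc] using this

lemma no_real (N : ℕ) (hN : 2 < N) (a b : ℕ → ℝ) (ha : ∀ k < N, 0 < a k) (l p : ℝ)
    (hp : Real.sin p ≠ 0) (v : Fin N → ℂ) (he : hper N a b p *ᵥ v = (l : ℂ) • v)
    (h : (Complex.exp ((p : ℂ) * Complex.I) * (starRingEnd ℂ) (v ⟨0, by omega⟩)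
      * v ⟨N - 1, by omega⟩).im = 0) : v = 0 := by
  have r0 := congrFun he ⟨0, by omega⟩
  have rl := congrFun he ⟨N - 1, by omega⟩
  have rm : ∀ k (hk : k + 2 < N), _ := fun k hk =>
    (row_mid N a b p v k hk).symm.trans (congrFun he ⟨k + 1, by omega⟩)
  rw [row_first N hN] at r0
  rw [row_last N hN] at rl
  simp only [Pi.smul_apply, smul_eq_mul] at r0 rl rm
  have a0 := (ha 0 (by omega)).ne'
  have aN := (ha (N - 1) (by omega)).ne'
  -- zero start implies zero
  have key : ∀ c : ℂ, (c * v ⟨0, by omega⟩).im = 0 → (c * v ⟨1, by omega⟩).im = 0 →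
      ∀ k (h : k < N), (c * v ⟨k, h⟩).im = 0 := by
    intro c h0 h1
    refine rec_zero N a b ha l (fun k => (c * v k).im) ?_ (fun _ => h0) (fun _ => h1)
    intro k hk
    have := congrArg (fun z => (c * z).im) (rm k hk)
    simpa only [mul_add, Complex.add_im, im_mul_real] using this
  have zero : v ⟨0, by omega⟩ = 0 → v ⟨1, by omega⟩ = 0 → v = 0 := by
    intro h0 h1
    ext ⟨k, hk⟩
    have e1 := key 1 (by simp [h0]) (by simp [h1]) k hk
    have e2 := key Complex.I (by simp [h0]) (by simp [h1]) k hk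
    apply Complex.ext
    · simpa using e2
    · simpa using e1
  -- the current vanishes
  have hJ : ((starRingEnd ℂ) (v ⟨0, by omega⟩) * v ⟨1, by omega⟩).im = 0 := by
    have := congrArg (fun z => ((starRingEnd ℂ) (v ⟨0, by omega⟩) * z).im) r0
    simp only [mul_add, Complex.add_im, mul_assoc, im_mul_real] at this
    have e : ((starRingEnd ℂ) (v ⟨0, by omega⟩) * v ⟨0, by omega⟩).im = 0 := by
      simp; ring
    rw [mul_assoc, mul_left_comm] at h
    rw [e, h] at this
    simpa [a0] using this
  have hc : ∃ c : ℂ, (v = 0 ∨ c ≠ 0) ∧ (c * v ⟨0, by omega⟩).im = 0 ∧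
      (c * v ⟨1, by omega⟩).im = 0 := by
    by_cases h0 : v ⟨0, by omega⟩ = 0
    · refine ⟨(starRingEnd ℂ) (v ⟨1, by omega⟩), ?_, by simp [h0], by simp; ring⟩
      by_cases h1 : v ⟨1, by omega⟩ = 0
      · exact Or.inl (zero h0 h1)
      · exact Or.inr (by simpa using h1)
    · exact ⟨(starRingEnd ℂ) (v ⟨0, by omega⟩), Or.inr (by simpa using h0),
        by simp; ring, hJ⟩
  obtain ⟨c, hc | hc, hc0, hc1⟩ := hc
  · exact hc
  have hk := key c hc0 hc1
  have hlast : v ⟨N - 1, by omega⟩ = 0 := by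
    refine corner_zero c _ hc p hp (hk _ _) ?_
    have := congrArg (fun z => (c * z).im) r0
    simp only [mul_add, Complex.add_im, mul_assoc, im_mul_real, hk] at this
    rw [mul_left_comm] at this
    simpa [aN, -Complex.mul_im] using this
  have hfirst : v ⟨0, by omega⟩ = 0 := by
    refine corner_zero c _ hc (-p) (by simpa using hp) (hk _ _) ?_
    have := congrArg (fun z => (c * z).im) rl
    simp only [mul_add, Complex.add_im, mul_assoc, im_mul_real, hk] at this
    rw [mul_left_comm] at this
    simpa [aN, -Complex.mul_im] using this
  refine zero hfirst ?_
  rw [hlast, hfirst] at r0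
  simpa [a0] using r0

lemma pair_identity (N : ℕ) (hN : 2 < N) (a b : ℕ → ℝ) (p q l m : ℝ) (v w : Fin N → ℂ)
    (hv : hper N a b p *ᵥ v = (l : ℂ) • v) (hw : hper N a b q *ᵥ w = (m : ℂ) • w) :
    ((m : ℂ) - l) * (star v ⬝ᵥ w) =
      a (N - 1) * (Complex.exp ((q : ℂ) * Complex.I) - Complex.exp ((p : ℂ) * Complex.I))
        * (starRingEnd ℂ) (v ⟨0, by omega⟩) * w ⟨N - 1, by omega⟩
      + a (N - 1) * (Complex.exp (-((q : ℂ) * Complex.I)) - Complex.exp (-((p : ℂ) * Complex.I)))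
        * (starRingEnd ℂ) (v ⟨N - 1, by omega⟩) * w ⟨0, by omega⟩ := by
  have h1 : star v ⬝ᵥ (hper N a b q *ᵥ w) = m * (star v ⬝ᵥ w) := by
    rw [hw, dotProduct_smul, smul_eq_mul]
  have h2 : star v ⬝ᵥ (hper N a b p *ᵥ w) = l * (star v ⬝ᵥ w) := by
    rw [dotProduct_mulVec, ← hper_herm N hN, ← star_mulVec, hv, star_smul, smul_dotProduct]
    simp
  rw [sub_mul, ← h1, ← h2, ← dotProduct_sub, ← Matrix.sub_mulVec, hper_sub N hN,
    Matrix.add_mulVec, dotProduct_add, Matrix.single_mulVec, Matrix.single_mulVec]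
  simp [Function.update_apply, dotProduct]
  ring

/-- For a differentiable normalized eigenpair branch
`(λ(p), W(p))` of the periodic matrix `h(p)`, for every `p ∈ (0, π)` one has
`λ'(p) = -2 a_N Im(e^{ip} conj(W₁(p)) W_N(p))` and `λ'(p) ≠ 0`. -/
theorem hper_eigenvalue_deriv (N : ℕ) (hN : 3 ≤ N) (a b : ℕ → ℝ)
    (ha : ∀ k < N, 0 < a k)
    (lam : ℝ → ℝ) (W : ℝ → EuclideanSpace ℂ (Fin N))
    (hlam : Differentiable ℝ lam) (hW : Differentiable ℝ W)
    (hnorm : ∀ p : ℝ, ‖W p‖ = 1)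
    (heig : ∀ p : ℝ, (hper N a b p) *ᵥ (W p) = (lam p : ℂ) • W p) :
    ∀ p ∈ Set.Ioo (0 : ℝ) Real.pi,
      deriv lam p
        = -2 * a (N - 1)
          * (Complex.exp ((p : ℂ) * Complex.I)
              * (starRingEnd ℂ) (W p (⟨0, by omega⟩ : Fin N))
              * W p (⟨N - 1, by omega⟩ : Fin N)).im ∧
      deriv lam p ≠ 0 := by
  intro p hp
  have hsin : Real.sin p ≠ 0 := (Real.sin_pos_of_pos_of_lt_pi hp.1 hp.2).ne'
  have hv : W p ≠ 0 := by
    intro h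
    have := hnorm p
    simp [h] at this
  set i0 : Fin N := ⟨0, by omega⟩ with hi0
  set i1 : Fin N := ⟨N - 1, by omega⟩ with hi1
  have hWi : ∀ i : Fin N, HasDerivAt (fun q => W q i) (deriv W p i) p := by
    intro i
    exact ((EuclideanSpace.proj (𝕜 := ℂ) i).restrictScalars ℝ).hasFDerivAt.comp_hasDerivAt p
      (hW p).hasDerivAt
  have hone : star (W p : Fin N → ℂ) ⬝ᵥ (W p : Fin N → ℂ) = 1 := by
    have h := EuclideanSpace.norm_sq_eq (W p)
    rw [hnorm p] at h
    simp only [dotProduct, Pi.star_apply, Complex.star_def, Complex.conj_mul']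
    exact_mod_cast h.symm.trans (one_pow 2)
  have hdot : HasDerivAt (fun q => star (W p : Fin N → ℂ) ⬝ᵥ (W q : Fin N → ℂ))
      (∑ i, star (W p i) * deriv W p i) p := by
    simp only [dotProduct, Pi.star_apply]
    exact HasDerivAt.fun_sum fun i _ => (hWi i).const_mul _
  have hl : HasDerivAt (fun q => (lam q : ℂ) - lam p) ((deriv lam p : ℝ) : ℂ) p :=
    ((hlam p).hasDerivAt.ofReal_comp).sub_const _
  have hL := hl.mul hdot
  have hI : HasDerivAt (fun q : ℝ => (q : ℂ) * Complex.I) Complex.I p := by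
    simpa using (hasDerivAt_id p).ofReal_comp.mul_const Complex.I
  have hE := (hI.cexp.sub_const (Complex.exp ((p : ℂ) * Complex.I))).const_mul (a (N - 1) : ℂ)
  have hE' := (hI.neg.cexp.sub_const (Complex.exp (-((p : ℂ) * Complex.I)))).const_mul
    (a (N - 1) : ℂ)
  have hR := ((hE.mul_const ((starRingEnd ℂ) (W p i0))).mul (hWi i1)).add
    ((hE'.mul_const ((starRingEnd ℂ) (W p i1))).mul (hWi i0))
  have heq := hL.unique (hR.congr_of_eventuallyEq (Filter.Eventually.of_forall fun q =>
    pair_identity N hN a b p q (lam p) (lam q) (W p) (W q) (heig p) (heig q)))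
  simp only [hone, sub_self, mul_one, zero_mul, add_zero, mul_zero, Pi.neg_apply] at heq
  have hform : deriv lam p = -2 * a (N - 1)
      * (Complex.exp ((p : ℂ) * Complex.I) * (starRingEnd ℂ) (W p i0) * W p i1).im := by
    have h2 := congrArg Complex.re heq
    rw [← neg_mul] at h2
    have e : Complex.exp (-(p : ℂ) * Complex.I)
        = (starRingEnd ℂ) (Complex.exp ((p : ℂ) * Complex.I)) := by
      rw [← Complex.exp_conj]; simp
    rw [e] at h2
    rw [Complex.ofReal_re] at h2
    rw [h2]
    generalize Complex.exp ((p : ℂ) * Complex.I) = z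
    simp
    ring
  refine ⟨hform, ?_⟩
  rw [hform]
  have aN := (ha (N - 1) (by omega)).ne'
  intro h0
  have h1 : (Complex.exp ((p : ℂ) * Complex.I) * (starRingEnd ℂ) (W p i0) * W p i1).im = 0 := by
    simpa [aN, -Complex.mul_im] using h0
  have := no_real N hN a b ha (lam p) p hsin (W p) (heig p) h1
  apply hv
  ext i
  exact congrFun this i
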